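/- For any Ψ : (0,∞) → (0,∞) and any ω : (0,∞) → (0,1), the Hausdorff dimension of E(Ψ,ω) satisfies dim_H(E(Ψ,ω)) ≤ inf{s ≥ 0 : Σ_{q=1}^∞ q(Ψ(q)ω(q))^s < ∞} (sum over positive integers q). -/

import Mathlib

/-!
Let `x ∈ E(Ψ, ω)`. For a fixed denominator only finitely many `p` satisfy `|x - p/q| ≤ Ψ q`, so
there are arbitrarily large `q` with `(1 - ω q) Ψ q ≤ |x - p/q| ≤ Ψ q` for some `p`
(`exists_large_shell`). Hence `x` lies in one of the two intervals of length `Ψ q * ω q` that make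
up this shell around `p/q`, and `E(Ψ, ω)` is a limsup set of such intervals. Provided `Ψ` is
eventually bounded, a bounded piece of the set meets `O(q)` of the intervals with denominator `q`,
and the usual covering argument bounds its `t`-dimensional Hausdorff measure by a constant times
`∑ q (Ψ q * ω q) ^ t` (`dimH_bounded_le`).

No boundedness of `Ψ` is assumed, but it is automatic when `E(Ψ, ω)` is nonempty: every real `x` is
within `1/2` of some `p/q`, so a point of `E(Ψ, ω)` forces `(1 - ω q) Ψ q ≤ 1/2` for large `q`, while
convergence of the series forces `Ψ q * ω q → 0` (`eventually_le_two`). The exponent `t = 0` never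
gives a convergent series.
-/

open Filter Set
open scoped ENNReal

/-- A real number `x` is `Ψ`-approximable: `|x - p/q| ≤ Ψ q` for infinitely many
pairs `(p, q) ∈ ℤ × ℕ` (with `q > 0`).  `WSet Ψ` is the set `W(Ψ)` of such `x`. -/
def WSet (Ψ : ℝ → ℝ) : Set ℝ :=
  {x : ℝ | {pq : ℤ × ℕ | 0 < pq.2 ∧ |x - (pq.1 : ℝ) / (pq.2 : ℝ)| ≤ Ψ (pq.2 : ℝ)}.Infinite}

/-- `ESet Ψ ω` is the set `E(Ψ, ω)` of `x ∈ W(Ψ)` such that for all sufficiently large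
`q ∈ ℕ` one has `|x - p/q| ≥ (1 - ω q) * Ψ q` for every `p ∈ ℤ`. -/
def ESet (Ψ ω : ℝ → ℝ) : Set ℝ :=
  {x : ℝ | x ∈ WSet Ψ ∧ ∃ Q : ℕ, ∀ q : ℕ, Q ≤ q → ∀ p : ℤ,
    (1 - ω (q : ℝ)) * Ψ (q : ℝ) ≤ |x - (p : ℝ) / (q : ℝ)|}

open MeasureTheory Measure Topology

/-- One of the two components of the shell `{x | (1 - ω q) Ψ q ≤ |x - p/q| ≤ Ψ q}`: the right-hand
one for `true`, the left-hand one for `false`. -/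
def shell (Ψ ω : ℝ → ℝ) (q : ℕ) (p : ℤ) (b : Bool) : Set ℝ :=
  if b then Icc ((p : ℝ) / q + (1 - ω q) * Ψ q) ((p : ℝ) / q + Ψ q)
  else Icc ((p : ℝ) / q - Ψ q) ((p : ℝ) / q - (1 - ω q) * Ψ q)

lemma ediam_shell (Ψ ω : ℝ → ℝ) (q : ℕ) (p : ℤ) (b : Bool) :
    Metric.ediam (shell Ψ ω q p b) = ENNReal.ofReal (Ψ q * ω q) := by
  cases b <;> simp only [shell, if_true, if_false, Bool.false_eq_true, Real.ediam_Icc] <;>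
    congr 1 <;> ring

lemma mem_shell {Ψ ω : ℝ → ℝ} {q : ℕ} {p : ℤ} {x : ℝ}
    (h1 : (1 - ω q) * Ψ q ≤ |x - (p : ℝ) / q|) (h2 : |x - (p : ℝ) / q| ≤ Ψ q) :
    ∃ b, x ∈ shell Ψ ω q p b := by
  rcases le_total 0 (x - (p : ℝ) / q) with h | h
  · rw [abs_of_nonneg h] at h1 h2
    exact ⟨true, by simp only [shell, if_true]; constructor <;> linarith⟩
  · rw [abs_of_nonpos h] at h1 h2
    exact ⟨false, by
      simp only [shell, Bool.false_eq_true, if_false]; constructor <;> linarith⟩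

/-- If `|x| ≤ N` and `|x - p/q| ≤ c`, then `|p| ≤ q (N + c)`; stated for integers. -/
lemma abs_num_le {x : ℝ} {p : ℤ} {q N c : ℕ} (hq : 0 < q) (hx : |x| ≤ N)
    (h : |x - (p : ℝ) / q| ≤ c) : p ∈ Finset.Icc (-((q * (N + c) : ℕ) : ℤ)) (q * (N + c) : ℕ) := by
  have hq' : (0 : ℝ) < q := by exact_mod_cast hq
  have hb : |(p : ℝ) / q| ≤ N + c := by
    rw [abs_le] at *
    constructor <;> linarith [hx.1, hx.2, h.1, h.2]
  rw [abs_div, abs_of_pos hq', div_le_iff₀ hq'] at hb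
  have hp : |p| ≤ ((q * (N + c) : ℕ) : ℤ) := by
    have : ((|p| : ℤ) : ℝ) ≤ (((q * (N + c) : ℕ) : ℤ) : ℝ) := by
      push_cast
      linarith
    exact_mod_cast this
  rw [Finset.mem_Icc]
  exact abs_le.mp hp

/-- A `Ψ`-approximable number has approximations with arbitrarily large denominator. -/
lemma exists_large_denom {Ψ : ℝ → ℝ} {x : ℝ} (hx : x ∈ WSet Ψ) (K : ℕ) :
    ∃ q : ℕ, K ≤ q ∧ 0 < q ∧ ∃ p : ℤ, |x - (p : ℝ) / q| ≤ Ψ q := by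
  by_contra! hcon
  apply hx
  obtain ⟨N, hN⟩ := exists_nat_ge |x|
  -- All approximating pairs have `q < K`, and for each `q` the numerator is bounded.
  refine Set.Finite.subset (s := ⋃ q ∈ Finset.range K,
    (fun p : ℤ => (p, q)) '' (Finset.Icc (-((q * (N + ⌈Ψ q⌉₊) : ℕ) : ℤ)) (q * (N + ⌈Ψ q⌉₊) : ℕ)))
    ?_ ?_
  · refine Set.Finite.biUnion (Finset.finite_toSet _) fun q _ => ?_
    exact (Finset.finite_toSet _).image _
  · rintro ⟨p, q⟩ ⟨hq, h⟩
    simp only at hq h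
    have hqK : q < K := by
      by_contra! hKq
      exact absurd h (not_le.mpr (hcon q hKq hq p))
    simp only [mem_iUnion]
    exact ⟨q, Finset.mem_range.mpr hqK, p,
      Finset.mem_coe.mpr (abs_num_le hq hN (h.trans (Nat.le_ceil _))), rfl⟩

lemma exists_large_shell {Ψ ω : ℝ → ℝ} {x : ℝ} (hx : x ∈ ESet Ψ ω) (K : ℕ) :
    ∃ q : ℕ, K ≤ q ∧ 0 < q ∧ ∃ p : ℤ, |x - (p : ℝ) / q| ≤ Ψ q ∧ ∃ b, x ∈ shell Ψ ω q p b := by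
  obtain ⟨hW, Q, hQ⟩ := hx
  obtain ⟨q, hKq, hq, p, hp⟩ := exists_large_denom hW (max K Q)
  exact ⟨q, (le_max_left _ _).trans hKq, hq, p, hp,
    mem_shell (hQ q ((le_max_right _ _).trans hKq) p) hp⟩

/-- Convergence of the series forces a positive exponent and `Ψ q * ω q → 0`. -/
lemma tendsto_zero_of_summable {f : ℕ → ℝ} (hf : ∀ q, 0 < q → 0 < f q) {t : ℝ} (ht : 0 ≤ t)
    (hs : Summable fun q : ℕ => (q : ℝ) * f q ^ t) : 0 < t ∧ Tendsto f atTop (𝓝 0) := by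
  have hlim := hs.tendsto_atTop_zero
  have ht0 : 0 < t := by
    refine lt_of_le_of_ne ht fun h => ?_
    subst h
    simp only [Real.rpow_zero, mul_one] at hlim
    exact not_tendsto_nhds_of_tendsto_atTop tendsto_natCast_atTop_atTop 0 hlim
  refine ⟨ht0, ?_⟩
  have hpow : Tendsto (fun q => f q ^ t) atTop (𝓝 0) := by
    refine tendsto_of_tendsto_of_tendsto_of_le_of_le' tendsto_const_nhds hlim ?_ ?_
    · filter_upwards [eventually_gt_atTop 0] with q hq
      exact Real.rpow_nonneg (hf q hq).le t
    · filter_upwards [eventually_gt_atTop 0] with q hq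
      have h1 : (1 : ℝ) ≤ q := by exact_mod_cast hq
      exact le_mul_of_one_le_left (Real.rpow_nonneg (hf q hq).le t) h1
  have hroot := hpow.rpow_const (p := t⁻¹) (Or.inr (inv_pos.mpr ht0).le)
  rw [Real.zero_rpow (inv_pos.mpr ht0).ne'] at hroot
  refine hroot.congr' ?_
  filter_upwards [eventually_gt_atTop 0] with q hq
  rw [← Real.rpow_mul (hf q hq).le, mul_inv_cancel₀ ht0.ne', Real.rpow_one]

/-- A single point of `E(Ψ, ω)` bounds `Ψ`, since it is within `1/(2q)` of the rationals with
denominator `q`. -/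
lemma eventually_le_two {Ψ ω : ℝ → ℝ} (hE : (ESet Ψ ω).Nonempty)
    (hlim : Tendsto (fun q : ℕ => Ψ q * ω q) atTop (𝓝 0)) :
    ∀ᶠ q : ℕ in atTop, Ψ q ≤ 2 := by
  obtain ⟨x, -, Q, hQ⟩ := hE
  filter_upwards [eventually_ge_atTop Q, eventually_gt_atTop 0,
    hlim.eventually_le_const one_pos] with q hQq hq hsmall
  have hq' : (1 : ℝ) ≤ q := by exact_mod_cast hq
  have hround := abs_sub_round (x * q)
  have heq : |x * q - round (x * q)| = |x - (round (x * q) : ℝ) / q| * q := by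
    have hx : x * q - round (x * q) = (x - (round (x * q) : ℝ) / q) * q := by
      field_simp
    conv_lhs => rw [hx, abs_mul, abs_of_pos (zero_lt_one.trans_le hq')]
  have hle := hQ q hQq (round (x * q))
  have := le_mul_of_one_le_right (abs_nonneg (x - (round (x * q) : ℝ) / q)) hq'
  nlinarith

/-- The covering argument for the part of `E(Ψ, ω)` in `[-N, N]`. -/
lemma dimH_bounded_le {Ψ ω : ℝ → ℝ} (hf : ∀ q : ℕ, 0 < q → 0 < Ψ q * ω q)
    (hE : (ESet Ψ ω).Nonempty) {t : ℝ} (ht : 0 ≤ t)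
    (hs : Summable fun q : ℕ => (q : ℝ) * (Ψ q * ω q) ^ t) (N : ℕ) :
    dimH (ESet Ψ ω ∩ {x | |x| ≤ N}) ≤ ENNReal.ofReal t := by
  obtain ⟨ht0, hlim⟩ := tendsto_zero_of_summable (f := fun q : ℕ => Ψ q * ω q) hf ht hs
  have hev : ∀ n : ℕ, ∃ K : ℕ, ∀ q : ℕ, K ≤ q →
      Ψ q * ω q ≤ 1 / ((n : ℝ) + 1) ∧ Ψ q ≤ 2 ∧ 0 < q := fun n =>
    eventually_atTop.mp ((hlim.eventually_le_const (by positivity)).and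
      ((eventually_le_two hE hlim).and (eventually_gt_atTop 0)))
  choose K hK using hev
  -- The `n`-th cover consists of the intervals with denominator at least `K n`; smaller
  -- denominators index empty sets, which contribute nothing because `t > 0`.
  let ι : ℕ → Type := fun _ => Σ q : ℕ,
    (↥(Finset.Icc (-((q * (N + 2) : ℕ) : ℤ)) (q * (N + 2) : ℕ)) × Bool)
  let U : ∀ n : ℕ, ι n → Set ℝ := fun n i =>
    if K n ≤ i.1 then shell Ψ ω i.1 i.2.1 i.2.2 else ∅
  have hcov := hausdorffMeasure_le_liminf_tsum (l := atTop) (ι := ι) t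
    (ESet Ψ ω ∩ {x | |x| ≤ N}) (fun n : ℕ => ENNReal.ofReal (1 / ((n : ℝ) + 1)))
    (by simpa using ENNReal.tendsto_ofReal (tendsto_one_div_add_atTop_nhds_zero_nat (𝕜 := ℝ))) U
    (Eventually.of_forall fun n i => by
      by_cases h : K n ≤ i.1
      · simp only [U, if_pos h, ediam_shell]
        exact ENNReal.ofReal_le_ofReal (hK n _ h).1
      · simp [U, if_neg h])
    (Eventually.of_forall fun n x hx => by
      obtain ⟨q, hKq, hq, p, hp, b, hb⟩ := exists_large_shell hx.1 (K n)
      have hp2 : |x - (p : ℝ) / q| ≤ (2 : ℕ) := by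
        exact_mod_cast hp.trans (hK n q hKq).2.1
      refine mem_iUnion.mpr ⟨⟨q, ⟨p, abs_num_le hq hx.2 hp2⟩, b⟩, ?_⟩
      simpa only [U, if_pos hKq] using hb)
  have hbound : ∀ n, ∑' i, Metric.ediam (U n i) ^ t ≤
      ENNReal.ofReal (2 * (2 * N + 5)) *
        ∑' q : ℕ, ENNReal.ofReal ((q : ℝ) * (Ψ q * ω q) ^ t) := by
    intro n
    rw [ENNReal.tsum_sigma', ← ENNReal.tsum_mul_left]
    refine ENNReal.tsum_le_tsum fun q => ?_
    by_cases h : K n ≤ q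
    · have hq := (hK n q h).2.2
      have hq1 : (1 : ℝ) ≤ q := by exact_mod_cast hq
      have hpow := Real.rpow_nonneg (hf q hq).le t
      have hcard : (((q * (N + 2) : ℕ) : ℤ) + 1 - -((q * (N + 2) : ℕ) : ℤ)).toNat
          = 2 * (q * (N + 2)) + 1 := by omega
      simp only [U, if_pos h, ediam_shell]
      rw [ENNReal.ofReal_rpow_of_nonneg (hf q hq).le ht, tsum_fintype, Finset.sum_const,
        Finset.card_univ, Fintype.card_prod, Fintype.card_coe, Int.card_Icc, Fintype.card_bool,
        hcard, nsmul_eq_mul, ← ENNReal.ofReal_natCast, ← ENNReal.ofReal_mul (by positivity),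
        ← ENNReal.ofReal_mul (by positivity)]
      apply ENNReal.ofReal_le_ofReal
      rw [← mul_assoc _ (q : ℝ)]
      apply mul_le_mul_of_nonneg_right _ hpow
      push_cast
      nlinarith
    · simp [U, if_neg h, ENNReal.zero_rpow_of_pos ht0]
  have hfin : μH[t] (ESet Ψ ω ∩ {x | |x| ≤ N}) ≠ ∞ := by
    refine ne_top_of_le_ne_top (ENNReal.mul_ne_top ENNReal.ofReal_ne_top hs.tsum_ofReal_ne_top)
      (hcov.trans (liminf_le_of_frequently_le' (Frequently.of_forall hbound)))
  lift t to NNReal using ht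
  rw [ENNReal.ofReal_coe_nnreal]
  exact dimH_le_of_hausdorffMeasure_ne_top hfin

/-- **Theorem.** For any `Ψ : (0,∞) → (0,∞)` and `ω : (0,∞) → (0,1)`,
`dim_H(E(Ψ,ω)) ≤ inf {s ≥ 0 : Σ_{q≥1} q(Ψ(q)ω(q))^s < ∞}`, where the infimum is taken in
`[0,∞]` (so it is `∞` if the series converges for no `s ≥ 0`). -/
theorem dimH_ESet_le (Ψ ω : ℝ → ℝ)
    (hΨpos : ∀ q : ℝ, 0 < q → 0 < Ψ q)
    (hωmem : ∀ q : ℝ, 0 < q → ω q ∈ Set.Ioo (0 : ℝ) 1) :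
    dimH (ESet Ψ ω) ≤
      sInf {s : ℝ≥0∞ | ∃ t : ℝ, 0 ≤ t ∧ s = ENNReal.ofReal t ∧
        Summable (fun q : ℕ => (q : ℝ) * (Ψ (q : ℝ) * ω (q : ℝ)) ^ t)} := by
  refine le_sInf ?_
  rintro s ⟨t, ht, rfl, hs⟩
  rcases (ESet Ψ ω).eq_empty_or_nonempty with hE | hE
  · simp [hE]
  have hf : ∀ q : ℕ, 0 < q → 0 < Ψ q * ω q := fun q hq =>
    mul_pos (hΨpos q (by exact_mod_cast hq)) (hωmem q (by exact_mod_cast hq)).1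
  have hcover : ESet Ψ ω ⊆ ⋃ N : ℕ, ESet Ψ ω ∩ {x | |x| ≤ N} := fun x hx => by
    obtain ⟨N, hN⟩ := exists_nat_ge |x|
    exact mem_iUnion.mpr ⟨N, hx, hN⟩
  refine (dimH_mono hcover).trans ?_
  rw [dimH_iUnion]
  exact iSup_le fun N => dimH_bounded_le hf hE ht hs N
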